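/- arXiv:1901.01872 — 2 statements merged into one kernel-verified Lean document; each statement's English description precedes it below -/
import Mathlib

section
/- For every x ∈ ℝⁿ, the approximate Hessian inverse satisfies λ I ⪯ Ĥ(x)⁻¹ ⪯ Λ I, where λ = 1/(2(1−δ)+αM) and Λ = (1+ρ)/(2(1−Δ)+αm) with ρ = 2(1−δ)/(2(1−δ)+αm). -/
open Matrix BigOperators

noncomputable section

/-- Second derivative of the `i`-th local objective. -/
def d2 {n : ℕ} (f : Fin n → ℝ → ℝ) (i : Fin n) (s : ℝ) : ℝ := deriv (deriv (f i)) s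

/-- The diagonal matrix `G(x)` with `G(x)_ii = f_i''(x_i)`. -/
def Gmat {n : ℕ} (f : Fin n → ℝ → ℝ) (x : Fin n → ℝ) : Matrix (Fin n) (Fin n) ℝ :=
  Matrix.diagonal (fun i => d2 f i (x i))

/-- The Hessian `H(x) = I − W + αG(x)` of the penalized objective. -/
def Hmat {n : ℕ} (W : Matrix (Fin n) (Fin n) ℝ) (f : Fin n → ℝ → ℝ) (α : ℝ)
    (x : Fin n → ℝ) : Matrix (Fin n) (Fin n) ℝ :=
  1 - W + α • Gmat f x

/-- `B = I − 2W_d + W`. -/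
def Bmat {n : ℕ} (W : Matrix (Fin n) (Fin n) ℝ) : Matrix (Fin n) (Fin n) ℝ :=
  1 - (2 : ℝ) • Matrix.diagonal (fun i => W i i) + W

/-- Diagonal entries of the splitting matrix `D(x) = αG(x) + 2(I − W_d)`. -/
def dEntry {n : ℕ} (W : Matrix (Fin n) (Fin n) ℝ) (f : Fin n → ℝ → ℝ) (α : ℝ)
    (x : Fin n → ℝ) (i : Fin n) : ℝ :=
  α * d2 f i (x i) + 2 * (1 - W i i)

/-- `D(x) = αG(x) + 2(I − W_d)`. -/
def Dmat {n : ℕ} (W : Matrix (Fin n) (Fin n) ℝ) (f : Fin n → ℝ → ℝ) (α : ℝ)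
    (x : Fin n → ℝ) : Matrix (Fin n) (Fin n) ℝ :=
  Matrix.diagonal (dEntry W f α x)

/-- `D(x)^{1/2}`. -/
def Dhalf {n : ℕ} (W : Matrix (Fin n) (Fin n) ℝ) (f : Fin n → ℝ → ℝ) (α : ℝ)
    (x : Fin n → ℝ) : Matrix (Fin n) (Fin n) ℝ :=
  Matrix.diagonal (fun i => Real.sqrt (dEntry W f α x i))

/-- `D(x)^{-1/2}`. -/
def Dinvhalf {n : ℕ} (W : Matrix (Fin n) (Fin n) ℝ) (f : Fin n → ℝ → ℝ) (α : ℝ)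
    (x : Fin n → ℝ) : Matrix (Fin n) (Fin n) ℝ :=
  Matrix.diagonal (fun i => (Real.sqrt (dEntry W f α x i))⁻¹)

/-- The approximate Hessian inverse
`Ĥ(x)⁻¹ = D(x)^{-1/2}(I + D(x)^{-1/2} B D(x)^{-1/2}) D(x)^{-1/2}`. -/
def Hhatinv {n : ℕ} (W : Matrix (Fin n) (Fin n) ℝ) (f : Fin n → ℝ → ℝ) (α : ℝ)
    (x : Fin n → ℝ) : Matrix (Fin n) (Fin n) ℝ :=
  Dinvhalf W f α x * (1 + Dinvhalf W f α x * Bmat W * Dinvhalf W f α x) * Dinvhalf W f α x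

/-- The penalized objective `F(x) = (1/2) xᵀ(I−W)x + α Σᵢ f_i(x_i)`. -/
def Fobj {n : ℕ} (W : Matrix (Fin n) (Fin n) ℝ) (f : Fin n → ℝ → ℝ) (α : ℝ)
    (x : Fin n → ℝ) : ℝ :=
  (1 / 2) * (x ⬝ᵥ ((1 - W).mulVec x)) + α * ∑ i, f i (x i)

/-- The gradient `g(x) = (I − W)x + α (f_i'(x_i))_i` of the penalized objective. -/
def gvec {n : ℕ} (W : Matrix (Fin n) (Fin n) ℝ) (f : Fin n → ℝ → ℝ) (α : ℝ)
    (x : Fin n → ℝ) : Fin n → ℝ :=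
  fun i => ((1 - W).mulVec x) i + α * deriv (f i) (x i)

/-- The asynchronous update `x^(i)`: agent `i` moves along the approximate Newton
direction with stepsize `ε / p i`; other coordinates are unchanged. -/
def upd {n : ℕ} (W : Matrix (Fin n) (Fin n) ℝ) (f : Fin n → ℝ → ℝ) (α : ℝ)
    (p : Fin n → ℝ) (ε : ℝ) (x : Fin n → ℝ) (i : Fin n) : Fin n → ℝ :=
  Function.update x i (x i - (ε / p i) * ((Hhatinv W f α x).mulVec (gvec W f α x)) i)

/-- Euclidean norm on `ℝⁿ`. -/
def enorm {n : ℕ} (v : Fin n → ℝ) : ℝ := Real.sqrt (∑ i, v i ^ 2)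

/-!
The matrix `B = I - 2W_d + W` has diagonal `I - W_d` and the off-diagonal part of `W`. Since the
rows of `W` sum to one, `B` is weakly diagonally dominant, so Gershgorin's theorem gives
`0 ⪯ B ⪯ 2(I - W_d)`. The matrix `Ĥ⁻¹` is monotone in `B`, hence lies between its values at these
two diagonal matrices; those values are diagonal, and their entries are compared with `λ` and `Λ`
one by one.
-/

section GershgorinOrder

open scoped ComplexOrder MatrixOrder

variable {ι 𝕜 : Type*} [DecidableEq ι] [RCLike 𝕜]

lemma diagonal_le_diagonal_iff {a b : ι → 𝕜} : diagonal a ≤ diagonal b ↔ a ≤ b := by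
  simp only [Matrix.le_iff, diagonal_sub, posSemidef_diagonal_iff, sub_nonneg, Pi.le_def]

variable [Fintype ι]

lemma nonneg_of_sum_row_le_diag {A : Matrix ι ι 𝕜} (hA : A.IsHermitian)
    (hdom : ∀ i, ∑ j ∈ Finset.univ.erase i, ‖A i j‖ ≤ RCLike.re (A i i)) : 0 ≤ A := by
  rw [nonneg_iff_posSemidef, hA.posSemidef_iff_eigenvalues_nonneg]
  intro i
  have heig : Module.End.HasEigenvalue (toLin' A) (hA.eigenvalues i : 𝕜) := by
    rw [Module.End.hasEigenvalue_iff_mem_spectrum, spectrum_toLin']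
    exact spectrum.algebraMap_mem 𝕜 (hA.eigenvalues_mem_spectrum_real i)
  obtain ⟨k, hk⟩ := eigenvalue_mem_ball heig
  rw [mem_closedBall_iff_norm'] at hk
  have hre : RCLike.re (A k k) - hA.eigenvalues i ≤ RCLike.re (A k k) := by
    simpa only [map_sub, RCLike.ofReal_re] using
      (RCLike.re_le_norm (A k k - (hA.eigenvalues i : 𝕜))).trans (hk.trans (hdom k))
  exact (sub_le_self_iff _).1 hre

lemma le_two_smul_diagonal_diag_of_sum_row_le_diag {A : Matrix ι ι 𝕜} (hA : A.IsHermitian)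
    (hdom : ∀ i, ∑ j ∈ Finset.univ.erase i, ‖A i j‖ ≤ RCLike.re (A i i)) :
    A ≤ (2 : 𝕜) • diagonal A.diag := by
  rw [← sub_nonneg]
  -- `2 A_d - A` is `A` with its off-diagonal signs reversed, so it is diagonally dominant as well.
  refine nonneg_of_sum_row_le_diag ?_ fun i => ?_
  · have hdiag : (diagonal A.diag).IsHermitian :=
      isHermitian_diagonal_iff.2 fun i => hA.apply i i
    exact (hdiag.smul (.ofNat 2)).sub hA
  · calc ∑ j ∈ Finset.univ.erase i, ‖((2 : 𝕜) • diagonal A.diag - A) i j‖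
        = ∑ j ∈ Finset.univ.erase i, ‖A i j‖ := Finset.sum_congr rfl fun j hj => by
          rw [Matrix.sub_apply, Matrix.smul_apply, diagonal_apply_ne' _ (Finset.ne_of_mem_erase hj),
            smul_zero, zero_sub, norm_neg]
      _ ≤ RCLike.re (A i i) := hdom i
      _ = RCLike.re (((2 : 𝕜) • diagonal A.diag - A) i i) := by
          rw [Matrix.sub_apply, Matrix.smul_apply, diagonal_apply_eq, diag_apply, smul_eq_mul,
            two_mul, add_sub_cancel_right]

end GershgorinOrder

lemma one_add_div_div_le_one_add_div_div {a b c g m : ℝ} (ha : 0 < a) (hm : 0 ≤ m)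
    (hc : c ∈ Set.Icc a b) (hg : m ≤ g) :
    (1 + c / (g + c)) / (g + c) ≤ (1 + b / (b + m)) / (a + m) := by
  obtain ⟨hac, hcb⟩ := hc
  have hb : 0 < b := by linarith
  have hratio : c / (g + c) ≤ b / (b + m) := by
    rw [div_le_div_iff₀ (by linarith) (by linarith)]
    linarith [mul_le_mul hcb hg hm hb.le]
  have hratio_nonneg : 0 ≤ b / (b + m) := div_nonneg hb.le (by linarith)
  exact div_le_div₀ (by linarith) (by linarith) (by linarith) (by linarith)

/-- `D^{-1/2} (I + D^{-1/2} B D^{-1/2}) D^{-1/2}` for `D = diagonal d`: the Neumann series of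
`(D - B)⁻¹`, truncated after its linear term. It is meaningful for `0 < d` only, since `√` and
`⁻¹` take junk values elsewhere. -/
def neumannInvApprox {ι : Type*} [Fintype ι] [DecidableEq ι] (d : ι → ℝ) (B : Matrix ι ι ℝ) :
    Matrix ι ι ℝ :=
  diagonal (fun i => (√(d i))⁻¹) *
    (1 + diagonal (fun i => (√(d i))⁻¹) * B * diagonal fun i => (√(d i))⁻¹) *
    diagonal fun i => (√(d i))⁻¹

section NeumannInvApprox

open scoped MatrixOrder

variable {ι : Type*} [Fintype ι] [DecidableEq ι]

lemma monotone_neumannInvApprox (d : ι → ℝ) : Monotone (neumannInvApprox d) := by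
  intro A B hAB
  have hself : IsSelfAdjoint (diagonal fun i => (√(d i))⁻¹) := isHermitian_diagonal _
  exact hself.conjugate_le_conjugate <| add_le_add_right (hself.conjugate_le_conjugate hAB) 1

lemma neumannInvApprox_diagonal {d : ι → ℝ} (hd : 0 ≤ d) (b : ι → ℝ) :
    neumannInvApprox d (diagonal b) = diagonal fun i => (1 + b i / d i) / d i := by
  simp only [neumannInvApprox, ← diagonal_one, diagonal_mul_diagonal, diagonal_add]
  congr 1
  ext i
  have hinv : (√(d i))⁻¹ * (√(d i))⁻¹ = (d i)⁻¹ := by rw [← mul_inv, Real.mul_self_sqrt (hd i)]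
  calc (√(d i))⁻¹ * (1 + (√(d i))⁻¹ * b i * (√(d i))⁻¹) * (√(d i))⁻¹
      = (1 + b i * ((√(d i))⁻¹ * (√(d i))⁻¹)) * ((√(d i))⁻¹ * (√(d i))⁻¹) := by ring
    _ = (1 + b i / d i) / d i := by rw [hinv, ← div_eq_mul_inv, ← div_eq_mul_inv]

end NeumannInvApprox

section Weights

variable {n : ℕ} {W : Matrix (Fin n) (Fin n) ℝ}

lemma Bmat_apply_self (W : Matrix (Fin n) (Fin n) ℝ) (i : Fin n) : Bmat W i i = 1 - W i i := by
  rw [Bmat, Matrix.add_apply, Matrix.sub_apply, one_apply_eq, Matrix.smul_apply,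
    diagonal_apply_eq, smul_eq_mul]
  ring

lemma Bmat_apply_self_mem_Icc {δ Δ : ℝ} {i : Fin n} (h : W i i ∈ Set.Icc δ Δ) :
    Bmat W i i ∈ Set.Icc (1 - Δ) (1 - δ) := by
  rw [Bmat_apply_self]
  exact ⟨sub_le_sub_left h.2 1, sub_le_sub_left h.1 1⟩

lemma Bmat_apply_ne (W : Matrix (Fin n) (Fin n) ℝ) {i j : Fin n} (hij : i ≠ j) :
    Bmat W i j = W i j := by
  simp [Bmat, hij]

lemma isHermitian_Bmat (hW : W.IsSymm) : (Bmat W).IsHermitian :=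
  (isHermitian_one.sub ((isHermitian_diagonal _).smul (.all 2))).add
    (isHermitian_iff_isSymm.2 hW)

lemma sum_erase_norm_Bmat (hW : W ∈ rowStochastic ℝ (Fin n)) (i : Fin n) :
    ∑ j ∈ Finset.univ.erase i, ‖Bmat W i j‖ = Bmat W i i :=
  calc ∑ j ∈ Finset.univ.erase i, ‖Bmat W i j‖
      = ∑ j ∈ Finset.univ.erase i, W i j := Finset.sum_congr rfl fun j hj => by
        rw [Bmat_apply_ne W (Finset.ne_of_mem_erase hj).symm,
          Real.norm_of_nonneg (nonneg_of_mem_rowStochastic hW)]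
    _ = Bmat W i i := by
        rw [Finset.sum_erase_eq_sub (Finset.mem_univ i), sum_row_of_mem_rowStochastic hW,
          Bmat_apply_self]

lemma Hhatinv_eq_neumannInvApprox (W : Matrix (Fin n) (Fin n) ℝ) (f : Fin n → ℝ → ℝ) (α : ℝ)
    (x : Fin n → ℝ) :
    Hhatinv W f α x = neumannInvApprox (fun i => α * d2 f i (x i) + 2 * Bmat W i i) (Bmat W) := by
  simp only [Bmat_apply_self]
  rfl

end Weights

open scoped MatrixOrder in
theorem stmt4_general {ι : Type*} [Fintype ι] [DecidableEq ι] {B : Matrix ι ι ℝ}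
    (hB : B.IsHermitian) (hdom : ∀ i, ∑ j ∈ Finset.univ.erase i, ‖B i j‖ ≤ B i i)
    {a b : ℝ} (ha : 0 < a) (hdiag : ∀ i, B i i ∈ Set.Icc a b)
    {m M : ℝ} (hm : 0 ≤ m) {g : ι → ℝ} (hg : ∀ i, g i ∈ Set.Icc m M) :
    (1 / (2 * b + M)) • (1 : Matrix ι ι ℝ) ≤ neumannInvApprox (fun i => g i + 2 * B i i) B ∧
      neumannInvApprox (fun i => g i + 2 * B i i) B ≤
        ((1 + 2 * b / (2 * b + m)) / (2 * a + m)) • (1 : Matrix ι ι ℝ) := by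
  set d : ι → ℝ := fun i => g i + 2 * B i i
  have hd0 : ∀ i, 0 < d i := fun i => by linarith [(hg i).1, (hdiag i).1]
  simp only [smul_one_eq_diagonal]
  constructor
  · calc diagonal (fun _ => 1 / (2 * b + M))
        ≤ diagonal fun i => (1 + 0 / d i) / d i :=
          diagonal_le_diagonal_iff.2 fun i => by
            rw [zero_div, add_zero]
            exact one_div_le_one_div_of_le (hd0 i) (by linarith [(hg i).2, (hdiag i).2])
      _ = neumannInvApprox d 0 := by
          rw [← neumannInvApprox_diagonal (fun i => (hd0 i).le), diagonal_zero]
      _ ≤ neumannInvApprox d B := monotone_neumannInvApprox d (nonneg_of_sum_row_le_diag hB hdom)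
  · calc neumannInvApprox d B
        ≤ neumannInvApprox d ((2 : ℝ) • diagonal B.diag) :=
          monotone_neumannInvApprox d (le_two_smul_diagonal_diag_of_sum_row_le_diag hB hdom)
      _ = diagonal fun i => (1 + 2 * B i i / d i) / d i := by
          rw [← diagonal_smul, neumannInvApprox_diagonal fun i => (hd0 i).le]
          rfl
      _ ≤ diagonal fun _ => (1 + 2 * b / (2 * b + m)) / (2 * a + m) :=
          diagonal_le_diagonal_iff.2 fun i =>
            one_add_div_div_le_one_add_div_div (by linarith) hm
              ⟨by linarith [(hdiag i).1], by linarith [(hdiag i).2]⟩ (hg i).1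

/-- Bounds on the approximate Hessian inverse: `λ I ⪯ Ĥ(x)⁻¹ ⪯ Λ I`. -/
theorem stmt4 (n : ℕ) (hn : 1 ≤ n)
    (W : Matrix (Fin n) (Fin n) ℝ) (hWsymm : W.IsSymm)
    (hWnonneg : ∀ i j, 0 ≤ W i j) (hWlt : ∀ i j, W i j < 1)
    (hWone : W.mulVec (fun _ => 1) = fun _ => 1)
    (hWnull : ∀ x : Fin n → ℝ, ((1 - W).mulVec x = 0 ↔ ∃ c : ℝ, x = fun _ => c))
    (δ Δ : ℝ) (hδ : 0 < δ) (hδΔ : δ ≤ Δ) (hΔ : Δ < 1)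
    (hWdiag : ∀ i, δ ≤ W i i ∧ W i i ≤ Δ)
    (f : Fin n → ℝ → ℝ) (hf : ∀ i, ContDiff ℝ 2 (f i))
    (hconv : ∀ i, ConvexOn ℝ Set.univ (f i))
    (m M : ℝ) (hm : 0 < m) (hmM : m ≤ M)
    (hd2 : ∀ i s, m ≤ d2 f i s ∧ d2 f i s ≤ M)
    (α : ℝ) (hα : 0 < α)
    (ρ lam Lam : ℝ) (hρ : ρ = 2 * (1 - δ) / (2 * (1 - δ) + α * m))
    (hlam : lam = 1 / (2 * (1 - δ) + α * M))
    (hLam : Lam = (1 + ρ) / (2 * (1 - Δ) + α * m)) :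
    ∀ x : Fin n → ℝ,
      (Hhatinv W f α x - lam • (1 : Matrix (Fin n) (Fin n) ℝ)).PosSemidef ∧
      (Lam • (1 : Matrix (Fin n) (Fin n) ℝ) - Hhatinv W f α x).PosSemidef := by
  intro x
  rw [hlam, hLam, hρ, Hhatinv_eq_neumannInvApprox]
  exact stmt4_general (isHermitian_Bmat hWsymm)
    (fun i => (sum_erase_norm_Bmat ⟨hWnonneg, hWone⟩ i).le) (sub_pos.2 hΔ)
    (fun i => Bmat_apply_self_mem_Icc (hWdiag i)) (mul_pos hα hm).le
    fun i => (hd2 i (x i)).imp (mul_le_mul_of_nonneg_left · hα.le)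
      (mul_le_mul_of_nonneg_left · hα.le)
end
end

section
/- If the stepsize parameter satisfies 0 < ε ≤ 2π(λ/Λ)², then for every x ∈ ℝⁿ the expected one-step contraction holds: Σᵢ pᵢ (F(x^(i)) − F*) ≤ (1 − β)(F(x) − F*), where β = αmε(2πλ² − εΛ²)/(λπ). -/
open Matrix BigOperators

noncomputable section

/-!
The direction `Ĥ(x)⁻¹ g` stays gradient-related uniformly in `x`: since `2(I − W_d) − B = I − W` and
`I − W` is positive semidefinite, `0 ≤ B ≤ 2(I − W_d)` in the Loewner order, so
`Ĥ(x)⁻¹ = D⁻¹ + D⁻¹BD⁻¹` lies between two diagonal matrices, which lie between `λ I` and `Λ I`.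
Along each coordinate `F` has second derivative at most `1/λ`, so averaging the quadratic upper
bounds of the `n` possible updates decreases `F` by at least a multiple of `‖g‖²`, and strong
convexity turns `‖g‖²` into the optimality gap.
-/

section SecondDerivative

variable {f : ℝ → ℝ}

lemma add_deriv_mul_sub_le_of_convexOn {S : Set ℝ} (hf : ConvexOn ℝ S f) {s y : ℝ} (hs : s ∈ S)
    (hy : y ∈ S) (hd : DifferentiableAt ℝ f s) : f s + deriv f s * (y - s) ≤ f y := by
  rcases lt_trichotomy s y with hsy | rfl | hsy
  · have hslope := hf.deriv_le_slope hs hy hsy hd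
    rw [slope_def_field, le_div_iff₀ (sub_pos.2 hsy)] at hslope
    linarith
  · simp
  · have hslope := hf.slope_le_deriv hy hs hsy hd
    rw [slope_def_field, div_le_iff₀ (sub_pos.2 hsy)] at hslope
    linarith

lemma add_deriv_mul_add_sq_le (hf : Differentiable ℝ f) (hf' : Differentiable ℝ (deriv f)) {m : ℝ}
    (hm : ∀ u, m ≤ deriv (deriv f) u) (s t : ℝ) :
    f s + deriv f s * t + m / 2 * t ^ 2 ≤ f (s + t) := by
  set h : ℝ → ℝ := fun u => f u - m / 2 * u ^ 2 with h_def
  have hasDeriv (u : ℝ) : HasDerivAt h (deriv f u - m * u) u :=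
    ((hf u).hasDerivAt.sub ((hasDerivAt_pow 2 u).const_mul (m / 2))).congr_deriv (by
      push_cast
      ring)
  have deriv_h : deriv h = fun u => deriv f u - m * u := funext fun u => (hasDeriv u).deriv
  have hasDeriv₂ (u : ℝ) : HasDerivAt (deriv h) (deriv (deriv f) u - m) u := by
    rw [deriv_h]
    exact ((hf' u).hasDerivAt.sub ((hasDerivAt_id u).const_mul m)).congr_deriv (by ring)
  have convex : ConvexOn ℝ Set.univ h :=
    convexOn_univ_of_deriv2_nonneg (fun u => (hasDeriv u).differentiableAt)
      (fun u => (hasDeriv₂ u).differentiableAt)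
      (fun u => (sub_nonneg.2 (hm u)).trans_eq (hasDeriv₂ u).deriv.symm)
  have tangent := add_deriv_mul_sub_le_of_convexOn convex (Set.mem_univ s)
    (Set.mem_univ (s + t)) (hasDeriv s).differentiableAt
  rw [(hasDeriv s).deriv] at tangent
  simp only [h_def] at tangent
  linarith

lemma le_add_deriv_mul_add_sq (hf : Differentiable ℝ f) (hf' : Differentiable ℝ (deriv f)) {M : ℝ}
    (hM : ∀ u, deriv (deriv f) u ≤ M) (s t : ℝ) :
    f (s + t) ≤ f s + deriv f s * t + M / 2 * t ^ 2 := by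
  have deriv_neg_f : deriv (-f) = -deriv f := deriv.neg'
  have lower := add_deriv_mul_add_sq_le (f := -f) (m := -M) hf.neg (deriv_neg_f ▸ hf'.neg)
    (fun u => by simpa [deriv_neg_f, deriv.neg'] using hM u) s t
  simp only [deriv_neg_f, Pi.neg_apply] at lower
  linarith

end SecondDerivative

section LoewnerOrder

open scoped MatrixOrder

lemma diagonal_le_diagonal {ι : Type*} [DecidableEq ι] {a c : ι → ℝ} (hac : a ≤ c) :
    diagonal a ≤ diagonal c := by
  rw [Matrix.le_iff, diagonal_sub, posSemidef_diagonal_iff]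
  exact fun i => sub_nonneg.2 (hac i)

variable {ι : Type*} [Fintype ι] {A C : Matrix ι ι ℝ}

lemma dotProduct_mulVec_le_of_le (hAC : A ≤ C) (u : ι → ℝ) : u ⬝ᵥ A *ᵥ u ≤ u ⬝ᵥ C *ᵥ u := by
  have := (Matrix.le_iff.1 hAC).dotProduct_mulVec_nonneg u
  rw [star_trivial, sub_mulVec, dotProduct_sub] at this
  exact sub_nonneg.1 this

variable [DecidableEq ι]

lemma mul_dotProduct_self_le_of_smul_one_le {l : ℝ} (hA : l • (1 : Matrix ι ι ℝ) ≤ A) (u : ι → ℝ) :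
    l * (u ⬝ᵥ u) ≤ u ⬝ᵥ A *ᵥ u := by
  simpa [smul_mulVec] using dotProduct_mulVec_le_of_le hA u

lemma dotProduct_mulVec_le_of_le_smul_one {L : ℝ} (hA : A ≤ L • (1 : Matrix ι ι ℝ)) (u : ι → ℝ) :
    u ⬝ᵥ A *ᵥ u ≤ L * (u ⬝ᵥ u) := by
  simpa [smul_mulVec] using dotProduct_mulVec_le_of_le hA u

lemma mulVec_dotProduct_mulVec_le {L : ℝ} (hL : 0 < L) (hA₀ : 0 ≤ A)
    (hA : A ≤ L • (1 : Matrix ι ι ℝ)) (u : ι → ℝ) :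
    A *ᵥ u ⬝ᵥ A *ᵥ u ≤ L ^ 2 * (u ⬝ᵥ u) := by
  set d := A *ᵥ u with d_def
  have psd := nonneg_iff_posSemidef.1 hA₀
  have symm : u ⬝ᵥ A *ᵥ d = d ⬝ᵥ d := by
    have transpose_eq : Aᵀ = A := psd.isHermitian
    rw [← dotProduct_transpose_mulVec, transpose_eq]
  have expand : (d - L • u) ⬝ᵥ A *ᵥ (d - L • u)
      = d ⬝ᵥ A *ᵥ d - 2 * L * (d ⬝ᵥ d) + L ^ 2 * (u ⬝ᵥ A *ᵥ u) := by
    simp only [mulVec_sub, mulVec_smul, sub_dotProduct, dotProduct_sub, smul_dotProduct,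
      dotProduct_smul, smul_eq_mul, symm, ← d_def]
    ring
  have nonneg : 0 ≤ (d - L • u) ⬝ᵥ A *ᵥ (d - L • u) := by
    simpa using psd.dotProduct_mulVec_nonneg (d - L • u)
  have upper_d := dotProduct_mulVec_le_of_le_smul_one hA d
  have upper_u := mul_le_mul_of_nonneg_left (dotProduct_mulVec_le_of_le_smul_one hA u) (sq_nonneg L)
  have : L * (d ⬝ᵥ d) ≤ L * (L ^ 2 * (u ⬝ᵥ u)) := by linarith
  exact le_of_mul_le_mul_left this hL

end LoewnerOrder

section RowSums

variable {ι : Type*} [Fintype ι] [DecidableEq ι] {V W : Matrix ι ι ℝ}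

lemma two_mul_dotProduct_diagonal_rowSum_add_smul_mulVec (hV : V.IsSymm) {c : ℝ} (hc : c ^ 2 = 1)
    (x : ι → ℝ) :
    2 * (x ⬝ᵥ (diagonal (fun i => ∑ j, V i j) + c • V) *ᵥ x)
      = ∑ i, ∑ j, V i j * (x i + c * x j) ^ 2 := by
  have diag : x ⬝ᵥ diagonal (fun i => ∑ j, V i j) *ᵥ x = ∑ i, ∑ j, V i j * x i ^ 2 := by
    refine Finset.sum_congr rfl fun i _ => ?_
    rw [mulVec_diagonal, ← Finset.sum_mul]
    ring
  have cross : x ⬝ᵥ V *ᵥ x = ∑ i, ∑ j, V i j * x i * x j := by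
    simp only [dotProduct, mulVec, Finset.mul_sum]
    exact Finset.sum_congr rfl fun i _ => Finset.sum_congr rfl fun j _ => by ring
  have swap : ∑ i, ∑ j, V i j * x j ^ 2 = ∑ i, ∑ j, V i j * x i ^ 2 := by
    rw [Finset.sum_comm]
    simp only [hV.apply]
  have expand : ∑ i, ∑ j, V i j * (x i + c * x j) ^ 2 = ∑ i, ∑ j, V i j * x i ^ 2
      + ∑ i, ∑ j, V i j * x j ^ 2 + 2 * (c * ∑ i, ∑ j, V i j * x i * x j) := by
    simp only [Finset.mul_sum, ← Finset.sum_add_distrib]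
    refine Finset.sum_congr rfl fun i _ => Finset.sum_congr rfl fun j _ => ?_
    linear_combination V i j * x j ^ 2 * hc
  rw [add_mulVec, dotProduct_add, smul_mulVec, dotProduct_smul, smul_eq_mul, diag, cross, expand,
    swap]
  ring

lemma posSemidef_diagonal_rowSum_add_smul (hV : V.IsSymm) (hV₀ : ∀ i j, 0 ≤ V i j) {c : ℝ}
    (hc : c ^ 2 = 1) : (diagonal (fun i => ∑ j, V i j) + c • V).PosSemidef := by
  refine .of_dotProduct_mulVec_nonneg ((isSymm_diagonal _).add (hV.smul c)) fun x => ?_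
  have sum_nonneg : 0 ≤ ∑ i, ∑ j, V i j * (x i + c * x j) ^ 2 :=
    Finset.sum_nonneg fun i _ => Finset.sum_nonneg fun j _ => mul_nonneg (hV₀ i j) (sq_nonneg _)
  rw [← two_mul_dotProduct_diagonal_rowSum_add_smul_mulVec hV hc] at sum_nonneg
  rw [star_trivial]
  linarith

lemma posSemidef_one_sub_of_mem_rowStochastic (hW : W.IsSymm) (hW₁ : W ∈ rowStochastic ℝ ι) :
    (1 - W).PosSemidef := by
  simpa [sum_row_of_mem_rowStochastic hW₁, sub_eq_add_neg] using
    posSemidef_diagonal_rowSum_add_smul hW hW₁.1 (c := -1) (by norm_num)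

end RowSums

section ApproximateInverse

open scoped MatrixOrder

variable {n : ℕ} {W : Matrix (Fin n) (Fin n) ℝ} {f : Fin n → ℝ → ℝ} {α : ℝ} {x : Fin n → ℝ}

lemma Bmat_nonneg (hW : W.IsSymm) (hW₁ : W ∈ rowStochastic ℝ (Fin n)) : 0 ≤ Bmat W := by
  set V := W - diagonal (fun i => W i i) with V_def
  have V_nonneg (i j : Fin n) : 0 ≤ V i j := by
    rcases eq_or_ne i j with rfl | hij
    · simp [V]
    · simpa [V, hij] using hW₁.1 i j
  have rowSum (i : Fin n) : ∑ j, V i j = 1 - W i i := by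
    simp [V, sum_row_of_mem_rowStochastic hW₁, diagonal_apply]
  have Bmat_eq : Bmat W = diagonal (fun i => ∑ j, V i j) + (1 : ℝ) • V := by
    have diagonal_rowSum : diagonal (fun i => ∑ j, V i j) = 1 - diagonal (fun i => W i i) := by
      rw [funext rowSum, ← diagonal_sub, diagonal_one]
    rw [diagonal_rowSum, Bmat, V_def]
    module
  rw [nonneg_iff_posSemidef, Bmat_eq]
  exact posSemidef_diagonal_rowSum_add_smul (hW.sub (isSymm_diagonal _)) V_nonneg (one_pow 2)

lemma Bmat_le_diagonal (hW : W.IsSymm) (hW₁ : W ∈ rowStochastic ℝ (Fin n)) :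
    Bmat W ≤ diagonal (fun i => 2 * (1 - W i i)) := by
  have sub_eq : diagonal (fun i => 2 * (1 - W i i)) - Bmat W = 1 - W := by
    ext i j
    rcases eq_or_ne i j with rfl | hij
    · simp only [Bmat, Matrix.sub_apply, diagonal_apply_eq, Matrix.add_apply, one_apply_eq,
        Matrix.smul_apply, smul_eq_mul]
      ring
    · simp [Bmat, hij]
  rw [Matrix.le_iff, sub_eq]
  exact posSemidef_one_sub_of_mem_rowStochastic hW hW₁

lemma Hhatinv_eq_diagonal_add (hD : ∀ i, 0 ≤ dEntry W f α x i) :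
    Hhatinv W f α x = diagonal (dEntry W f α x)⁻¹
      + diagonal (dEntry W f α x)⁻¹ * Bmat W * diagonal (dEntry W f α x)⁻¹ := by
  have sq : Dinvhalf W f α x * Dinvhalf W f α x = diagonal (dEntry W f α x)⁻¹ := by
    rw [Dinvhalf, diagonal_mul_diagonal]
    congr 1
    ext i
    rw [← mul_inv, Real.mul_self_sqrt (hD i), Pi.inv_apply]
  rw [Hhatinv, ← sq]
  noncomm_ring

lemma smul_one_le_Hhatinv (hW : W.IsSymm) (hW₁ : W ∈ rowStochastic ℝ (Fin n))
    (hD : ∀ i, 0 ≤ dEntry W f α x i) {l : ℝ} (hl : ∀ i, l ≤ (dEntry W f α x i)⁻¹) :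
    l • (1 : Matrix (Fin n) (Fin n) ℝ) ≤ Hhatinv W f α x := by
  have selfAdjoint : IsSelfAdjoint (diagonal (dEntry W f α x)⁻¹) := isSymm_diagonal _
  calc l • (1 : Matrix (Fin n) (Fin n) ℝ) = diagonal (fun _ => l) := smul_one_eq_diagonal l
    _ ≤ diagonal (dEntry W f α x)⁻¹ := diagonal_le_diagonal hl
    _ ≤ Hhatinv W f α x := by
      rw [Hhatinv_eq_diagonal_add hD]
      exact le_add_of_nonneg_right (selfAdjoint.conjugate_nonneg (Bmat_nonneg hW hW₁))

lemma Hhatinv_nonneg (hW : W.IsSymm) (hW₁ : W ∈ rowStochastic ℝ (Fin n))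
    (hD : ∀ i, 0 ≤ dEntry W f α x i) : 0 ≤ Hhatinv W f α x := by
  simpa using smul_one_le_Hhatinv hW hW₁ hD fun i => inv_nonneg.2 (hD i)

lemma Hhatinv_le_smul_one (hW : W.IsSymm) (hW₁ : W ∈ rowStochastic ℝ (Fin n))
    (hD : ∀ i, 0 ≤ dEntry W f α x i) {L : ℝ}
    (hL : ∀ i, (1 + 2 * (1 - W i i) / dEntry W f α x i) / dEntry W f α x i ≤ L) :
    Hhatinv W f α x ≤ L • (1 : Matrix (Fin n) (Fin n) ℝ) := by
  set E := diagonal (dEntry W f α x)⁻¹ with E_def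
  have selfAdjoint : IsSelfAdjoint E := isSymm_diagonal _
  calc Hhatinv W f α x ≤ E + E * diagonal (fun i => 2 * (1 - W i i)) * E := by
        rw [Hhatinv_eq_diagonal_add hD]
        exact add_le_add_right (selfAdjoint.conjugate_le_conjugate (Bmat_le_diagonal hW hW₁)) E
    _ = diagonal (fun i => (1 + 2 * (1 - W i i) / dEntry W f α x i) / dEntry W f α x i) := by
        rw [E_def, diagonal_mul_diagonal, diagonal_mul_diagonal, diagonal_add]
        congr 1
        ext i
        simp only [Pi.inv_apply, div_eq_mul_inv]
        ring
    _ ≤ diagonal (fun _ => L) := diagonal_le_diagonal hL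
    _ = L • 1 := (smul_one_eq_diagonal L).symm

end ApproximateInverse

section SplittingDiagonal

variable {n : ℕ} {W : Matrix (Fin n) (Fin n) ℝ} {f : Fin n → ℝ → ℝ} {α : ℝ} {x : Fin n → ℝ}
  {i : Fin n}

lemma le_dEntry (hα : 0 ≤ α) {m Δ : ℝ} (hm : m ≤ d2 f i (x i)) (hΔ : W i i ≤ Δ) :
    2 * (1 - Δ) + α * m ≤ dEntry W f α x i := by
  have := mul_le_mul_of_nonneg_left hm hα
  rw [dEntry]
  linarith

lemma dEntry_le (hα : 0 ≤ α) {M δ : ℝ} (hM : d2 f i (x i) ≤ M) (hδ : δ ≤ W i i) :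
    dEntry W f α x i ≤ 2 * (1 - δ) + α * M := by
  have := mul_le_mul_of_nonneg_left hM hα
  rw [dEntry]
  linarith

lemma div_dEntry_le (hα : 0 < α) {m δ : ℝ} (hm₀ : 0 < m) (hm : m ≤ d2 f i (x i)) (hδ : δ ≤ W i i)
    (hW : W i i < 1) :
    2 * (1 - W i i) / dEntry W f α x i ≤ 2 * (1 - δ) / (2 * (1 - δ) + α * m) := by
  have hαm : 0 < α * m := mul_pos hα hm₀
  have hαd2 : α * m ≤ α * d2 f i (x i) := mul_le_mul_of_nonneg_left hm hα.le
  rw [dEntry, div_le_div_iff₀ (by linarith) (by linarith)]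
  have hδ₁ : 0 ≤ 1 - δ := by linarith
  linarith [mul_le_mul_of_nonneg_left hαd2 hδ₁, mul_le_mul_of_nonneg_right hδ hαm.le]

lemma one_add_div_dEntry_div_dEntry_le (hα : 0 < α) {m δ Δ : ℝ} (hm₀ : 0 < m)
    (hm : m ≤ d2 f i (x i)) (hδ : δ ≤ W i i) (hΔ : W i i ≤ Δ) (hΔ₁ : Δ < 1) :
    (1 + 2 * (1 - W i i) / dEntry W f α x i) / dEntry W f α x i
      ≤ (1 + 2 * (1 - δ) / (2 * (1 - δ) + α * m)) / (2 * (1 - Δ) + α * m) := by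
  have ratio_le := div_dEntry_le hα hm₀ hm hδ (hΔ.trans_lt hΔ₁)
  have hδ₁ : 0 < 1 - δ := by linarith
  have bound_pos : 0 < 2 * (1 - Δ) + α * m := by linarith [mul_pos hα hm₀]
  exact div_le_div₀ (by positivity) (by linarith) bound_pos (le_dEntry hα.le hm hΔ)

end SplittingDiagonal

section Objective

lemma two_mul_mul_sub_le_dotProduct_self {ι : Type*} [Fintype ι] {g h : ι → ℝ} {μ a b : ℝ}
    (hμ : 0 ≤ μ) (hab : a + g ⬝ᵥ h + μ / 2 * (h ⬝ᵥ h) ≤ b) : 2 * μ * (a - b) ≤ g ⬝ᵥ g := by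
  have square : 0 ≤ (g + μ • h) ⬝ᵥ (g + μ • h) := by
    simpa using dotProduct_self_star_nonneg (g + μ • h)
  have expand : (g + μ • h) ⬝ᵥ (g + μ • h)
      = g ⬝ᵥ g + 2 * μ * (g ⬝ᵥ h + μ / 2 * (h ⬝ᵥ h)) := by
    simp only [add_dotProduct, dotProduct_add, smul_dotProduct, dotProduct_smul, smul_eq_mul,
      dotProduct_comm h g]
    ring
  linarith [mul_le_mul_of_nonneg_left hab (mul_nonneg zero_le_two hμ)]

variable {n : ℕ} {W : Matrix (Fin n) (Fin n) ℝ} {f : Fin n → ℝ → ℝ} {α : ℝ}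

lemma Fobj_add (hW : W.IsSymm) (x h : Fin n → ℝ) :
    Fobj W f α (x + h) = Fobj W f α x + gvec W f α x ⬝ᵥ h + 1 / 2 * (h ⬝ᵥ (1 - W) *ᵥ h)
      + α * ∑ i, (f i (x i + h i) - f i (x i) - deriv (f i) (x i) * h i) := by
  have cross : x ⬝ᵥ (1 - W) *ᵥ h = h ⬝ᵥ (1 - W) *ᵥ x := by
    rw [← dotProduct_transpose_mulVec, (isSymm_one.sub hW).eq]
  have gvec_dotProduct :
      gvec W f α x ⬝ᵥ h = h ⬝ᵥ (1 - W) *ᵥ x + α * ∑ i, deriv (f i) (x i) * h i := by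
    simp only [gvec, dotProduct, Finset.mul_sum, ← Finset.sum_add_distrib]
    exact Finset.sum_congr rfl fun i _ => by ring
  simp only [gvec_dotProduct, Fobj, mulVec_add, add_dotProduct, dotProduct_add, cross,
    Finset.sum_sub_distrib, Pi.add_apply]
  ring

lemma Fobj_add_gvec_dotProduct_add_le (hW : W.IsSymm) (hW₁ : W ∈ rowStochastic ℝ (Fin n))
    (hf : ∀ i, Differentiable ℝ (f i)) (hf' : ∀ i, Differentiable ℝ (deriv (f i))) {m : ℝ}
    (hm : ∀ i s, m ≤ d2 f i s) (hα : 0 ≤ α) (x h : Fin n → ℝ) :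
    Fobj W f α x + gvec W f α x ⬝ᵥ h + α * m / 2 * (h ⬝ᵥ h) ≤ Fobj W f α (x + h) := by
  have quadratic_nonneg : 0 ≤ h ⬝ᵥ (1 - W) *ᵥ h := by
    simpa using (posSemidef_one_sub_of_mem_rowStochastic hW hW₁).dotProduct_mulVec_nonneg h
  have local_le : m / 2 * (h ⬝ᵥ h)
      ≤ ∑ i, (f i (x i + h i) - f i (x i) - deriv (f i) (x i) * h i) := by
    rw [dotProduct, Finset.mul_sum]
    refine Finset.sum_le_sum fun i _ => ?_
    linarith [add_deriv_mul_add_sq_le (hf i) (hf' i) (hm i) (x i) (h i)]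
  rw [Fobj_add hW]
  linarith [mul_le_mul_of_nonneg_left local_le hα]

lemma two_mul_mul_Fobj_sub_le (hW : W.IsSymm) (hW₁ : W ∈ rowStochastic ℝ (Fin n))
    (hf : ∀ i, Differentiable ℝ (f i)) (hf' : ∀ i, Differentiable ℝ (deriv (f i))) {m : ℝ}
    (hm : ∀ i s, m ≤ d2 f i s) (hm₀ : 0 ≤ m) (hα : 0 ≤ α) (x y : Fin n → ℝ) :
    2 * (α * m) * (Fobj W f α x - Fobj W f α y) ≤ gvec W f α x ⬝ᵥ gvec W f α x := by
  refine two_mul_mul_sub_le_dotProduct_self (h := y - x) (mul_nonneg hα hm₀) ?_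
  simpa using Fobj_add_gvec_dotProduct_add_le hW hW₁ hf hf' hm hα x (y - x)

lemma Fobj_add_single_le (hW : W.IsSymm) {i : Fin n} (hf : Differentiable ℝ (f i))
    (hf' : Differentiable ℝ (deriv (f i))) {M : ℝ} (hM : ∀ s, d2 f i s ≤ M) (hα : 0 ≤ α)
    (x : Fin n → ℝ) (t : ℝ) :
    Fobj W f α (x + Pi.single i t)
      ≤ Fobj W f α x + gvec W f α x i * t + (1 - W i i + α * M) / 2 * t ^ 2 := by
  have quadratic :
      (Pi.single i t : Fin n → ℝ) ⬝ᵥ (1 - W) *ᵥ Pi.single i t = (1 - W i i) * t ^ 2 := by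
    simp only [mulVec_single, op_smul_eq_smul, dotProduct_smul, single_dotProduct, col_apply,
      Matrix.sub_apply, one_apply_eq, smul_eq_mul]
    ring
  have local_sum : ∑ j, (f j (x j + (Pi.single i t : Fin n → ℝ) j) - f j (x j)
        - deriv (f j) (x j) * (Pi.single i t : Fin n → ℝ) j)
      = f i (x i + t) - f i (x i) - deriv (f i) (x i) * t := by
    rw [Finset.sum_eq_single_of_mem i (Finset.mem_univ i) fun j _ hj => by simp [hj]]
    simp
  rw [Fobj_add hW, quadratic, local_sum, dotProduct_single]
  linarith [mul_le_mul_of_nonneg_left (le_add_deriv_mul_add_sq hf hf' hM (x i) t) hα]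

lemma upd_eq_add_single (p : Fin n → ℝ) (ε : ℝ) (x : Fin n → ℝ) (i : Fin n) :
    upd W f α p ε x i
      = x + Pi.single i (-(ε / p i * (Hhatinv W f α x *ᵥ gvec W f α x) i)) := by
  ext j
  rcases eq_or_ne j i with rfl | hj
  · simp [upd, sub_eq_add_neg]
  · simp [upd, hj]

end Objective

section RandomizedCoordinateDescent

variable {ι : Type*} [Fintype ι] [DecidableEq ι] {F : (ι → ℝ) → ℝ} {x g d p : ι → ℝ} {L q ε : ℝ}

lemma sum_mul_add_single_le (hL : 0 ≤ L) (hq : 0 < q) (hp : ∀ i, q ≤ p i) (hp₁ : ∑ i, p i = 1)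
    (hF : ∀ i t, F (x + Pi.single i t) ≤ F x + g i * t + L / 2 * t ^ 2) :
    ∑ i, p i * F (x + Pi.single i (-(ε / p i * d i)))
      ≤ F x - ε * (g ⬝ᵥ d) + L * ε ^ 2 / (2 * q) * (d ⬝ᵥ d) := by
  have step (i : ι) : p i * F (x + Pi.single i (-(ε / p i * d i)))
      ≤ p i * F x - ε * (g i * d i) + L * ε ^ 2 / (2 * q) * (d i * d i) := by
    have hpi : 0 < p i := hq.trans_le (hp i)
    calc p i * F (x + Pi.single i (-(ε / p i * d i)))
        ≤ p i * (F x + g i * (-(ε / p i * d i)) + L / 2 * (-(ε / p i * d i)) ^ 2) :=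
          mul_le_mul_of_nonneg_left (hF i _) hpi.le
      _ = p i * F x - ε * (g i * d i) + L * ε ^ 2 / (2 * p i) * (d i * d i) := by
          field_simp
          ring
      _ ≤ p i * F x - ε * (g i * d i) + L * ε ^ 2 / (2 * q) * (d i * d i) := by
          have := mul_self_nonneg (d i)
          have := hp i
          gcongr
  calc ∑ i, p i * F (x + Pi.single i (-(ε / p i * d i)))
      ≤ ∑ i, (p i * F x - ε * (g i * d i) + L * ε ^ 2 / (2 * q) * (d i * d i)) :=
        Finset.sum_le_sum fun i _ => step i
    _ = F x - ε * (g ⬝ᵥ d) + L * ε ^ 2 / (2 * q) * (d ⬝ᵥ d) := by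
        rw [Finset.sum_add_distrib, Finset.sum_sub_distrib, ← Finset.sum_mul, hp₁, one_mul,
          ← Finset.mul_sum, ← Finset.mul_sum, dotProduct, dotProduct]

lemma sum_mul_add_single_sub_le (hL : 0 ≤ L) (hq : 0 < q) (hp : ∀ i, q ≤ p i)
    (hp₁ : ∑ i, p i = 1)
    (hF : ∀ i t, F (x + Pi.single i t) ≤ F x + g i * t + L / 2 * t ^ 2)
    {a b c μ : ℝ} (hgd : a * (g ⬝ᵥ g) ≤ g ⬝ᵥ d) (hdd : d ⬝ᵥ d ≤ b ^ 2 * (g ⬝ᵥ g))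
    (hgap : 2 * μ * (F x - c) ≤ g ⬝ᵥ g) (hε : 0 ≤ ε) (hεle : ε * L * b ^ 2 ≤ 2 * q * a) :
    ∑ i, p i * (F (x + Pi.single i (-(ε / p i * d i))) - c)
      ≤ (1 - μ * ε * (2 * q * a - ε * L * b ^ 2) / q) * (F x - c) := by
  have descent := sum_mul_add_single_le (ε := ε) (d := d) hL hq hp hp₁ hF
  set r := ε * (2 * q * a - ε * L * b ^ 2) / (2 * q) with r_def
  have hr : 0 ≤ r := div_nonneg (mul_nonneg hε (sub_nonneg.2 hεle)) (by positivity)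
  calc ∑ i, p i * (F (x + Pi.single i (-(ε / p i * d i))) - c)
      = ∑ i, p i * F (x + Pi.single i (-(ε / p i * d i))) - c := by
        simp only [mul_sub, Finset.sum_sub_distrib, ← Finset.sum_mul, hp₁, one_mul]
    _ ≤ F x - ε * (g ⬝ᵥ d) + L * ε ^ 2 / (2 * q) * (d ⬝ᵥ d) - c := by linarith
    _ ≤ F x - ε * (a * (g ⬝ᵥ g)) + L * ε ^ 2 / (2 * q) * (b ^ 2 * (g ⬝ᵥ g)) - c := by gcongr
    _ = F x - r * (g ⬝ᵥ g) - c := by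
        rw [r_def]
        field_simp
        ring
    _ ≤ F x - r * (2 * μ * (F x - c)) - c := by linarith [mul_le_mul_of_nonneg_left hgap hr]
    _ = (1 - μ * ε * (2 * q * a - ε * L * b ^ 2) / q) * (F x - c) := by
        rw [r_def]
        field_simp
        ring

end RandomizedCoordinateDescent

theorem stmt7_general {n : ℕ} {W : Matrix (Fin n) (Fin n) ℝ} (hW : W.IsSymm)
    (hW₁ : W ∈ rowStochastic ℝ (Fin n))
    {δ Δ : ℝ} (hδΔ : δ ≤ Δ) (hΔ : Δ < 1) (hWdiag : ∀ i, δ ≤ W i i ∧ W i i ≤ Δ)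
    {f : Fin n → ℝ → ℝ} (hf : ∀ i, Differentiable ℝ (f i))
    (hf' : ∀ i, Differentiable ℝ (deriv (f i)))
    {m M : ℝ} (hm : 0 < m) (hmM : m ≤ M) (hd2 : ∀ i s, m ≤ d2 f i s ∧ d2 f i s ≤ M)
    {α : ℝ} (hα : 0 < α)
    {p : Fin n → ℝ} {pmin : ℝ} (hpmin : 0 < pmin) (hp : ∀ i, pmin ≤ p i) (hpsum : ∑ i, p i = 1)
    {ρ lam Lam : ℝ} (hρ : ρ = 2 * (1 - δ) / (2 * (1 - δ) + α * m))
    (hlam : lam = 1 / (2 * (1 - δ) + α * M))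
    (hLam : Lam = (1 + ρ) / (2 * (1 - Δ) + α * m))
    {ε : ℝ} (hε : 0 ≤ ε) (hεle : ε ≤ 2 * pmin * (lam / Lam) ^ 2)
    {β : ℝ} (hβ : β = α * m * ε * (2 * pmin * lam ^ 2 - ε * Lam ^ 2) / (lam * pmin))
    (x y : Fin n → ℝ) :
    ∑ i, p i * (Fobj W f α (upd W f α p ε x i) - Fobj W f α y)
      ≤ (1 - β) * (Fobj W f α x - Fobj W f α y) := by
  have hΔ₁ : 0 < 1 - Δ := sub_pos.2 hΔ
  have hδ₁ : 0 < 1 - δ := by linarith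
  have hM : 0 < M := hm.trans_le hmM
  have hlam₀ : 0 < lam := by rw [hlam]; positivity
  have hLam₀ : 0 < Lam := by rw [hLam, hρ]; positivity
  have dEntry_pos (i) : 0 < dEntry W f α x i :=
    lt_of_lt_of_le (by positivity) (le_dEntry hα.le (hd2 i (x i)).1 (hWdiag i).2)
  have dEntry_nonneg (i) := (dEntry_pos i).le
  have lower := smul_one_le_Hhatinv hW hW₁ dEntry_nonneg (l := lam) fun i => by
    rw [hlam, one_div]
    exact inv_anti₀ (dEntry_pos i) (dEntry_le hα.le (hd2 i (x i)).2 (hWdiag i).1)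
  have upper := Hhatinv_le_smul_one hW hW₁ dEntry_nonneg (L := Lam) fun i => by
    rw [hLam, hρ]
    exact one_add_div_dEntry_div_dEntry_le hα hm (hd2 i (x i)).1 (hWdiag i).1 (hWdiag i).2 hΔ
  have gap := two_mul_mul_Fobj_sub_le hW hW₁ hf hf' (fun i s => (hd2 i s).1) hm.le hα.le x y
  have smooth (i t) : Fobj W f α (x + Pi.single i t)
      ≤ Fobj W f α x + gvec W f α x i * t + 1 / lam / 2 * t ^ 2 := by
    refine (Fobj_add_single_le hW (hf i) (hf' i) (fun s => (hd2 i s).2) hα.le x t).trans ?_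
    have : 1 - W i i + α * M ≤ 1 / lam := by
      rw [hlam, one_div_one_div]
      linarith [(hWdiag i).1]
    gcongr
  have rate_nonneg : ε * (1 / lam) * Lam ^ 2 ≤ 2 * pmin * lam := by
    rw [div_pow, ← mul_div_assoc, le_div_iff₀ (by positivity)] at hεle
    rw [mul_one_div, div_mul_eq_mul_div, div_le_iff₀ hlam₀]
    linarith
  have β_eq : β = α * m * ε * (2 * pmin * lam - ε * (1 / lam) * Lam ^ 2) / pmin := by
    rw [hβ]
    field_simp
  simp only [upd_eq_add_single, β_eq]
  exact sum_mul_add_single_sub_le (one_div_nonneg.2 hlam₀.le) hpmin hp hpsum smooth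
    (mul_dotProduct_self_le_of_smul_one_le lower _)
    (mulVec_dotProduct_mulVec_le hLam₀ (Hhatinv_nonneg hW hW₁ dEntry_nonneg) upper _)
    gap hε rate_nonneg

/-- Expected one-step contraction of the optimality gap:
`Σᵢ pᵢ (F(x^(i)) − F*) ≤ (1 − β)(F(x) − F*)`. -/
theorem stmt7 (n : ℕ) (hn : 1 ≤ n)
    (W : Matrix (Fin n) (Fin n) ℝ) (hWsymm : W.IsSymm)
    (hWnonneg : ∀ i j, 0 ≤ W i j) (hWlt : ∀ i j, W i j < 1)
    (hWone : W.mulVec (fun _ => 1) = fun _ => 1)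
    (hWnull : ∀ x : Fin n → ℝ, ((1 - W).mulVec x = 0 ↔ ∃ c : ℝ, x = fun _ => c))
    (δ Δ : ℝ) (hδ : 0 < δ) (hδΔ : δ ≤ Δ) (hΔ : Δ < 1)
    (hWdiag : ∀ i, δ ≤ W i i ∧ W i i ≤ Δ)
    (f : Fin n → ℝ → ℝ) (hf : ∀ i, ContDiff ℝ 2 (f i))
    (hconv : ∀ i, ConvexOn ℝ Set.univ (f i))
    (m M : ℝ) (hm : 0 < m) (hmM : m ≤ M)
    (hd2 : ∀ i s, m ≤ d2 f i s ∧ d2 f i s ≤ M)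
    (α : ℝ) (hα : 0 < α)
    (p : Fin n → ℝ) (pmin pmax : ℝ) (hpmin : 0 < pmin) (hpmax : pmax < 1)
    (hp : ∀ i, pmin ≤ p i ∧ p i ≤ pmax) (hpsum : ∑ i, p i = 1)
    (xstar : Fin n → ℝ) (hmin : ∀ y, Fobj W f α xstar ≤ Fobj W f α y)
    (ρ lam Lam : ℝ) (hρ : ρ = 2 * (1 - δ) / (2 * (1 - δ) + α * m))
    (hlam : lam = 1 / (2 * (1 - δ) + α * M))
    (hLam : Lam = (1 + ρ) / (2 * (1 - Δ) + α * m))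
    (ε : ℝ) (hε : 0 < ε) (hεle : ε ≤ 2 * pmin * (lam / Lam) ^ 2)
    (β : ℝ) (hβ : β = α * m * ε * (2 * pmin * lam ^ 2 - ε * Lam ^ 2) / (lam * pmin)) :
    ∀ x : Fin n → ℝ,
      ∑ i, p i * (Fobj W f α (upd W f α p ε x i) - Fobj W f α xstar) ≤
        (1 - β) * (Fobj W f α x - Fobj W f α xstar) := by
  exact stmt7_general hWsymm ⟨hWnonneg, hWone⟩ hδΔ hΔ hWdiag
    (fun i => (hf i).differentiable two_ne_zero) (fun i => (hf i).differentiable_deriv_two)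
    hm hmM hd2 hα hpmin (fun i => (hp i).1) hpsum hρ hlam hLam hε.le hεle hβ (y := xstar)
end
end
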